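/- (Consistency-around-a-face-centered-cube for the pair (A2_{(0;0)}, C1_{(0)}).) There exists a nonzero polynomial p in twelve variables with complex coefficients such that: for all α1,α2,β1,β2,γ1,γ2 ∈ ℂ and all x, xa, xb, xc, zn, zw ∈ ℂ with p(α1,α2,β1,β2,γ1,γ2,x,xa,xb,xc,zn,zw) ≠ 0, there exist xd, y, ya, yb, yc, yd, ze, zs ∈ ℂ satisfying all fourteen equations of the CAFCC system for the pair (A, C) := (A2_{(0;0)}, C1_{(0)}) with parameters (α1,α2),(β1,β2),(γ1,γ2). In other words, the overdetermined system of fourteen face-centered quad equations on the face-centered cube is consistent: generic initial data x, xa, xb, xc, zn, zw admits a completion solving all fourteen equations. -/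

import Mathlib

noncomputable section

open Matrix Complex

/-- The type-A face-centered quad polynomial `A2_{(d1;d2)}`. -/
noncomputable def A2 (d1 d2 : ℕ) (x xa xb xc xd p1 p2 q1 q2 : ℂ) : ℂ :=
  (((p1-q1)+(p2-q2))*(xb*xc-xa*xd) + (p1-p2)*(xa*xc-xb*xd) + (q1-q2)*(xa*xb-xc*xd))*x
  + (p2-q1)*(xa*x^2-xb*xc*xd) - (p2-q2)*(xb*x^2-xa*xc*xd)
  - (p1-q1)*(xc*x^2-xa*xb*xd) + (p1-q2)*(xd*x^2-xa*xb*xc)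
  + (d1:ℂ)*x*(p1-p2)*(q1-q2)*((p1-q1)+(p2-q2))
      *(x+xa+xb+xc+xd-(p1-p2)^2-(p1-q1)*(p2-q1)-(p1-q2)*(p2-q2))^d2
  + (d1:ℂ)*((p1-q2)*(p2-q1)*((p1-q1)*xb+(p2-q2)*xc)*(2*x-(p1-p2)*(q1-q2))^d2
      - (p1-q1)*(p2-q2)*((p1-q1)*xa+(p2-q1)*xd)*(2*x+(p1-p2)*(q1-q2))^d2)
  + (d2:ℂ)*(xa*(p1-q1)*(p1-q2)*((p2-q2)*(p1-q2)^2-(q1-q2)*xb)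
      - xb*(p1-q1)*(p2-q1)*((p1-q2)*(p1-q1)^2-(p1-p2)*xd)
      - xc*(p1-q2)*(p2-q2)*((p2-q1)*(p2-q2)^2+(p1-p2)*xa)
      + xd*(p2-q1)*(p2-q2)*((p1-q1)*(p2-q1)^2+(q1-q2)*xc)
      + (xa*xd*(p1-q1)*(q2-p2) + xb*xc*(p2-q1)*(p1-q2)
          + (p1-p2)*(p1-q1)*(p1-q2)*(p2-q1)*(p2-q2)*(q1-q2))*((p1-q1)+(p2-q2)))

/-- The type-C face-centered quad polynomial `C2_{(δ1;δ2;δ3)}`. -/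
noncomputable def C2 (d1 d2 d3 : ℕ) (x xa xb xc xd p1 p2 q1 q2 : ℂ) : ℂ :=
  (xd-xc)*(x^2+xa*xb) + (q1-q2)*(x^2-xa*xb)*((p1-q1)+(p1-q2))^d3
  + 2*(d3:ℂ)*((p2-q1)*xa-(p2-q2)*xb)*x^2
  + ((xa+xb+2*(d2:ℂ)*(p2-q1)*(p2-q2))*(xc-xd)
      - (xa-xb)*((p2-q1)+(p2-q2))*((p1-q1)+(p1-q2))^d3 + 2*(d3:ℂ)*(q1-q2)*xa*xb)*x
  + (d1:ℂ)*((p1-q1)^(1+d2+d3)+(p1-q2)^(1+d2+d3)+2*(d2:ℂ)*xc*xd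
        -(xc+xd)*((p1-q1)+(p1-q2))^d2)
      *((q1-q2)*((d2:ℂ)*(p2-q1)*(p2-q2)-x)-xb*(p2-q1)+xa*(p2-q2))
  + (d1:ℂ)*(p2-q1)*(p2-q2)*(xc-xd+(q1-q2)*((p1-q1)+(p1-q2)-2*x)^d3)
      *(xa+xb-(q1-q2)^2-(p2-q1)*(p2-q2))^d2

/-- The type-C face-centered quad polynomial `C1_{(δ)}`. -/
noncomputable def C1 (d : ℕ) (x xa xb xc xd p1 p2 q1 q2 : ℂ) : ℂ :=
  (xc-xd)*x^2 + (2*(q1-q2)*(-((xc+xd)/2))^d - (xa+xb)*(xc-xd))*x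
  + 2*(-((xc+xd)/2))^d*((q2-p2)*xa+(p2-q1)*xb)
  + (xa*xb - (d:ℂ)*(p2-q1)*(p2-q2))*(xc-xd)

/-- The unnormalized type-A Lax matrix of `A2_{(d1;d2)}`. -/
noncomputable def NA2 (d1 d2 : ℕ) (x xa xb p1 p2 q1 q2 : ℂ) : Matrix (Fin 2) (Fin 2) ℂ :=
  x^2 • (!![q1-p1, (p2-q1)*xa-(p2-q2)*xb; 0, q2-p1]
      + (d1:ℂ) • !![0, (d2:ℂ)*(p1-p2)*(q1-q2)*((p1-q1)+(p2-q2)); 0, 0])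
  + x • (!![xa*(p1-p2)+xb*((p1-q1)+(p2-q2)), (q1-q2)*xa*xb;
            q1-q2, xb*(p1-p2)+xa*((p1-q1)+(p2-q2))]
      + (d1:ℂ) • !![(d2:ℂ)*(2*(p1-q1)*(p2-q2)^2+(p1-p2)*(q1-q2)*((p1-p2)-(q1-q2))),
            (p1-p2)*(q1-q2)*((p1-q1)+(p2-q2))
                *(xa+xb-(p1-q1)^2-(p2-q2)^2-(p1-p2)*(q1-q2))^d2
              - 2*(d2:ℂ)*(p1-q1)*(p1-q2)*(xa*(p2-q2)+xb*(q1-p2));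
            0, (d2:ℂ)*(2*(p1-q2)*(p2-q1)^2-(p1-p2)*(q1-q2)*((p1-p2)+(q1-q2)))])
  + (!![xa*xb*(q2-p1), 0; xb*(p2-q1)-xa*(p2-q2), xa*xb*(q1-p1)]
      + (d1:ℂ) • !![(p1-q2)*(p2-q1)*(p2-q2)*(xb-(p1-p2)*(q1-q2)-(p2-q2)^2)^d2
              - (d2:ℂ)*(p1-q2)*(xa*(p1-p2)*(p2-q2)-xb*(p2-q1)*(p1-q1)),
            (p1-q1)*(p1-q2)*(xb*(p2-q1)*((p1-p2)*(q2-q1)-(p1-q1)^2)^d2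
              - xa*(p2-q2)*((p1-p2)*(q1-q2)-(p1-q2)^2)^d2
              - (d2:ℂ)*(q1-q2)*(xa*xb-((p1-q1)+(p2-q2))*(p1-p2)*(p2-q1)*(p2-q2)));
            (d2:ℂ)*(p2-q1)*(p2-q2)*(q2-q1),
            (p1-q1)*(p2-q1)*(p2-q2)*(xa+(p1-p2)*(q1-q2)-(p2-q1)^2)^d2
              + (d2:ℂ)*(p1-q1)*(xa*(p1-q2)*(p2-q2)-xb*(p1-p2)*(p2-q1))])

/-- The normalization factor `D_LA = i(p1−q1)(q1+xa−p2−x)(q2+x−p2−xb)`. -/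
noncomputable def DA2a (x xa xb p1 p2 q1 q2 : ℂ) : ℂ :=
  Complex.I*(p1-q1)*(q1+xa-p2-x)*(q2+x-p2-xb)

/-- The normalization factor `D_LA = (p1−q1)(x−xa)(x−xb)`. -/
noncomputable def DA2b (x xa xb p1 p2 q1 q2 : ℂ) : ℂ :=
  (p1-q1)*(x-xa)*(x-xb)

/-- The type-A Lax matrix of `A2_{(d1;d2)}` with normalization `DA2a`. -/
noncomputable def laxA2a (d1 d2 : ℕ) (x xa xb p1 p2 q1 q2 : ℂ) : Matrix (Fin 2) (Fin 2) ℂ :=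
  (DA2a x xa xb p1 p2 q1 q2)⁻¹ • NA2 d1 d2 x xa xb p1 p2 q1 q2

/-- The type-A Lax matrix of `A2_{(d1;d2)}` with normalization `DA2b`. -/
noncomputable def laxA2b (d1 d2 : ℕ) (x xa xb p1 p2 q1 q2 : ℂ) : Matrix (Fin 2) (Fin 2) ℂ :=
  (DA2b x xa xb p1 p2 q1 q2)⁻¹ • NA2 d1 d2 x xa xb p1 p2 q1 q2

/-- The type-C Lax matrix of `C2_{(δ1;δ2;δ3)}`. -/
noncomputable def laxC2 (d1 d2 d3 : ℕ) (x xb xd p1 p2 q1 q2 : ℂ) : Matrix (Fin 2) (Fin 2) ℂ :=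
  let e12 : ℂ := ((q2-q1)+(d3:ℂ)*xb)*(xd*((q1-p1)+(q2-p1))^d2*(-1:ℂ)^d3
        + 2*(d3:ℂ)*(p1-p2)^2 + ((q1-p1)^(1+d2)+(q2-p1)^(1+d2))*((q1-p2)+(q2-p2))^d3)
      + 2*(d2:ℂ)*(xb*((p2-q1)-xd)+(p2-q2)*(xb-xd*(p2-q1)))
      - (d3:ℂ)*xb*(xd+2*(p1-p2)^2-((p2-q1)+(p2-q2)));
  let f11 : ℂ := (q1-p2)*((p2-q2)*((q1-q2)*((p1-p2)+(p1-q2)-2*xd)+(p2-q2)^2-xb)^d2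
        + xb*(2*xd-(p1-q1)-(p1-q2))^d2)*(-1:ℂ)^d3;
  let f12 : ℂ := (q1-p2)*((p2-q2)*((q1-q2)*((p2-q1)*(p2-q2)-2*(p1-q1)*(p1-q2))^d2
            *((q1-p1)+(q2-p1))^d3
          - xd*(2*(p1-q1)*(q2-q1)+(p2-q1)*(p2-q2))^d2*(-1:ℂ)^d3)
      + xb*(((q1-p1)+(q2-p1))^(1+d2+d3)-(d2:ℂ)*(p2-q2)*(q1-q2)
          - 2*((d2:ℂ)+(d3:ℂ))*(p1-q1)*(p1-q2)+xd*((p2-p1)+(q1-p1))^d2*(-1:ℂ)^d3));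
  let f22 : ℂ := (p2-q2)*(-((q2-p1)^(1+d2+d3)+(q1-p1)^(1+d2+d3))
        - xd*(2*(q1-p1)-(p2-q2))^d2*(-1:ℂ)^d3-(d2:ℂ)*(p2-q1)*(q1-q2))
      - (2*(d2:ℂ)+(d3:ℂ))*(xd-(q1-q2))*xb - (d3:ℂ)*(xd-(q1-q2)*((p1-q1)+(p1-q2)))*xb;
  x^2 • (!![1, -(q1-q2)-xd; 0, 0]
      + (d1:ℂ) • !![-(2*((d2:ℂ)+(d3:ℂ))),
            2*(d2:ℂ)*(xd+(q1-q2))+(d3:ℂ)*(2*(xd-xb*(p2-q2))+(q1-q2)*((p1-q1)+(p1-q2)+1));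
            0, -(2*(d3:ℂ)*(p2-q1))])
  + x • (!![-xb, -(xb*((p2-q1)+(p2-q2)-xd)); 1, -((p2-q1)+(p2-q2)+xd)]
      + (d1:ℂ) • !![-((q1-q2)*(2*(xd-(p1-q1)))^d2*(-1:ℂ)^d3)
              + 2*((d2:ℂ)+(d3:ℂ))*xb+(d2:ℂ)*((p2-q1)^2+(p2-q2)^2), e12;
            -(2*((d2:ℂ)+(d3:ℂ))),
            2*((d2:ℂ)+(d3:ℂ))*xd-2*(d3:ℂ)*xb*(q1-q2)
              +(2*(d2:ℂ)+(d3:ℂ))*((p2-q1)+(p2-q2))*((p1-q1)+(p1-q2)+1)^d3])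
  + (!![0, 0; -xb, xb*(xd-(q1-q2))]
      + (d1:ℂ) • !![f11, f12;
            (q2-p2)*(2*xd-(p1-p2)-(p1-q2))^d2*(-1:ℂ)^d3+2*((d2:ℂ)+(d3:ℂ))*xb, f22])

/-- The type-C Lax matrix of `C1_{(δ)}`. -/
noncomputable def laxC1 (d : ℕ) (x xb xd p1 p2 q1 q2 : ℂ) : Matrix (Fin 2) (Fin 2) ℂ :=
  ((-1:ℂ)^d/(x-xb)) •
    !![(x+(d:ℂ)*(p2-q1))*(x-xb+(d:ℂ)*(q2-p2)),
        2*((q1-q2)*x+(p2-q1)*xb)*(-(xd/2))^d+((d:ℂ)*(p2-q1)*(p2-q2)-x*(x-xb))*xd;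
        x-xb+(d:ℂ)*(q2-p2), 2*(p2-q2)*(-(xd/2))^d+(xb-x)*xd]

/-!
Cutting the cube by the plane through `x`, `y`, `zn`, `zs` gives two face-centered triangular
prisms. On a prism every `A2` equation is a vanishing signed sum of four legs `(p - q) / (x - z)`,
and every `C1` equation equates the difference of two corners with a combination of two such legs.
Eliminating a common corner from two of the `A2` equations yields the third. In the sum of all three
the legs within the triangle cancel, and what remains links the three lateral `C1` equations, so
that two `A2` and two `C1` equations imply the remaining five. At `x`, `y`, `zn`, `zs` the equations
of the cube are the differences of those of the two prisms, in which the common terms cancel.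

A prism is completed from generic initial data by solving, one after another, four equations each of
which is affine in its unknown corner. The coefficients of the unknowns do not vanish at one
explicit integral solution, hence they do not vanish on a Zariski neighbourhood of it.
-/

/-! ### Zariski neighbourhoods and regular functions -/

section Zariski

variable {σ K : Type*} [Field K] {v₀ : σ → K}

/-- The filter of Zariski neighbourhoods of a point `v₀` of affine space, generated by the
principal open sets `{v | p v ≠ 0}` containing `v₀`. -/
def zariskiNhds (v₀ : σ → K) : Filter (σ → K) where
  sets := {s | ∃ p : MvPolynomial σ K, MvPolynomial.eval v₀ p ≠ 0 ∧
    ∀ v, MvPolynomial.eval v p ≠ 0 → v ∈ s}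
  univ_sets := ⟨1, by simp, fun _ _ => Set.mem_univ _⟩
  sets_of_superset := fun ⟨p, hp, hs⟩ hst => ⟨p, hp, fun v hv => hst (hs v hv)⟩
  inter_sets := fun ⟨p, hp, hs⟩ ⟨q, hq, ht⟩ =>
    ⟨p * q, by rw [map_mul]; exact mul_ne_zero hp hq, fun v hv => by
      rw [map_mul] at hv
      exact ⟨hs v (left_ne_zero_of_mul hv), ht v (right_ne_zero_of_mul hv)⟩⟩

theorem eventually_zariskiNhds_iff {P : (σ → K) → Prop} :
    (∀ᶠ v in zariskiNhds v₀, P v) ↔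
      ∃ p : MvPolynomial σ K, MvPolynomial.eval v₀ p ≠ 0 ∧
        ∀ v, MvPolynomial.eval v p ≠ 0 → P v :=
  Iff.rfl

theorem pure_le_zariskiNhds : pure v₀ ≤ zariskiNhds v₀ :=
  fun _ ⟨_, hp, hs⟩ => hs v₀ hp

theorem eventually_eval_ne_zero {p : MvPolynomial σ K} (hp : MvPolynomial.eval v₀ p ≠ 0) :
    ∀ᶠ v in zariskiNhds v₀, MvPolynomial.eval v p ≠ 0 :=
  ⟨p, hp, fun _ hv => hv⟩

/-- A function on affine space is regular at `v₀` if it agrees on a Zariski neighbourhood of `v₀`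
with a quotient of polynomials whose denominator does not vanish at `v₀`. -/
@[fun_prop]
def IsRegularAt (f : (σ → K) → K) (v₀ : σ → K) : Prop :=
  ∃ n d : MvPolynomial σ K, MvPolynomial.eval v₀ d ≠ 0 ∧
    ∀ᶠ v in zariskiNhds v₀, f v = MvPolynomial.eval v n / MvPolynomial.eval v d

namespace IsRegularAt

variable {f g : (σ → K) → K}

theorem eval (p : MvPolynomial σ K) : IsRegularAt (fun v => MvPolynomial.eval v p) v₀ :=
  ⟨p, 1, by simp, .of_forall fun v => by simp⟩

@[fun_prop]
theorem const (c : K) : IsRegularAt (fun _ => c) v₀ := by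
  simpa only [MvPolynomial.eval_C] using eval (MvPolynomial.C c)

@[fun_prop]
theorem apply (i : σ) : IsRegularAt (fun v => v i) v₀ := by
  simpa only [MvPolynomial.eval_X] using eval (MvPolynomial.X i)

@[fun_prop]
theorem add (hf : IsRegularAt f v₀) (hg : IsRegularAt g v₀) :
    IsRegularAt (fun v => f v + g v) v₀ := by
  obtain ⟨n, d, hd, hf⟩ := hf
  obtain ⟨m, e, he, hg⟩ := hg
  refine ⟨n * e + d * m, d * e, by rw [map_mul]; exact mul_ne_zero hd he, ?_⟩
  filter_upwards [hf, hg, eventually_eval_ne_zero hd, eventually_eval_ne_zero he]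
    with v hfv hgv hdv hev
  simp only [hfv, hgv, map_add, map_mul, div_add_div _ _ hdv hev]

@[fun_prop]
theorem mul (hf : IsRegularAt f v₀) (hg : IsRegularAt g v₀) :
    IsRegularAt (fun v => f v * g v) v₀ := by
  obtain ⟨n, d, hd, hf⟩ := hf
  obtain ⟨m, e, he, hg⟩ := hg
  refine ⟨n * m, d * e, by rw [map_mul]; exact mul_ne_zero hd he, ?_⟩
  filter_upwards [hf, hg] with v hfv hgv
  simp only [hfv, hgv, map_mul, div_mul_div_comm]

@[fun_prop]
theorem neg (hf : IsRegularAt f v₀) : IsRegularAt (fun v => -f v) v₀ := by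
  simpa only [neg_one_mul] using (const (-1)).mul hf

@[fun_prop]
theorem sub (hf : IsRegularAt f v₀) (hg : IsRegularAt g v₀) :
    IsRegularAt (fun v => f v - g v) v₀ := by
  simpa only [sub_eq_add_neg] using hf.add hg.neg

@[fun_prop]
theorem pow (hf : IsRegularAt f v₀) (k : ℕ) : IsRegularAt (fun v => f v ^ k) v₀ := by
  induction k with
  | zero => simpa only [pow_zero] using const 1
  | succ k ih => simpa only [pow_succ] using ih.mul hf

theorem exists_eval_div_eval_of_ne_zero (hf : IsRegularAt f v₀) (h₀ : f v₀ ≠ 0) :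
    ∃ n d : MvPolynomial σ K, MvPolynomial.eval v₀ n ≠ 0 ∧ MvPolynomial.eval v₀ d ≠ 0 ∧
      ∀ᶠ v in zariskiNhds v₀, f v = MvPolynomial.eval v n / MvPolynomial.eval v d := by
  obtain ⟨n, d, hd, hf⟩ := hf
  refine ⟨n, d, fun hn => h₀ ?_, hd, hf⟩
  rw [pure_le_zariskiNhds hf, hn, zero_div]

theorem inv (hf : IsRegularAt f v₀) (h₀ : f v₀ ≠ 0) : IsRegularAt (fun v => (f v)⁻¹) v₀ := by
  obtain ⟨n, d, hn, -, hf⟩ := hf.exists_eval_div_eval_of_ne_zero h₀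
  refine ⟨d, n, hn, ?_⟩
  filter_upwards [hf] with v hfv
  rw [hfv, inv_div]

theorem div (hf : IsRegularAt f v₀) (hg : IsRegularAt g v₀) (h₀ : g v₀ ≠ 0) :
    IsRegularAt (fun v => f v / g v) v₀ := by
  simpa only [div_eq_mul_inv] using hf.mul (hg.inv h₀)

theorem eventually_ne_zero (hf : IsRegularAt f v₀) (h₀ : f v₀ ≠ 0) :
    ∀ᶠ v in zariskiNhds v₀, f v ≠ 0 := by
  obtain ⟨n, d, hn, hd, hf⟩ := hf.exists_eval_div_eval_of_ne_zero h₀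
  filter_upwards [hf, eventually_eval_ne_zero hn, eventually_eval_ne_zero hd] with v hfv hnv hdv
  rw [hfv]
  exact div_ne_zero hnv hdv

theorem eventually_ne (hf : IsRegularAt f v₀) (hg : IsRegularAt g v₀) (h₀ : f v₀ ≠ g v₀) :
    ∀ᶠ v in zariskiNhds v₀, f v ≠ g v :=
  ((hf.sub hg).eventually_ne_zero (sub_ne_zero.2 h₀)).mono fun _ => sub_ne_zero.1

theorem eventually_pairwise_ne {ι : Type*} [Finite ι] {F G : (σ → K) → ι → K}
    (hF : ∀ i, IsRegularAt (fun v => F v i) v₀) (hG : ∀ i, IsRegularAt (fun v => G v i) v₀)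
    (h₀ : Pairwise fun i j => F v₀ i ≠ G v₀ j) :
    ∀ᶠ v in zariskiNhds v₀, Pairwise fun i j => F v i ≠ G v j :=
  Filter.eventually_all.2 fun i => Filter.eventually_all.2 fun j =>
    Filter.eventually_imp_distrib_left.2 fun hij => (hF i).eventually_ne (hG j) (h₀ hij)

theorem vecCons₃ {f₀ f₁ f₂ : (σ → K) → K} (h₀ : IsRegularAt f₀ v₀) (h₁ : IsRegularAt f₁ v₀)
    (h₂ : IsRegularAt f₂ v₀) (i : Fin 3) : IsRegularAt (fun v => ![f₀ v, f₁ v, f₂ v] i) v₀ := by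
  fin_cases i
  exacts [h₀, h₁, h₂]

theorem exists_root_of_affine {F : (σ → K) → K → K} {z₀ z₁ : K}
    (hF : ∀ z, IsRegularAt (fun v => F v z) v₀)
    (hAffine : ∀ v z, F v z = F v 0 + (F v 1 - F v 0) * z)
    (hz₀ : F v₀ z₀ = 0) (hz₁ : F v₀ z₁ ≠ 0) :
    ∃ r, IsRegularAt r v₀ ∧ r v₀ = z₀ ∧ ∀ᶠ v in zariskiNhds v₀, F v (r v) = 0 := by
  have hSlope : F v₀ 0 - F v₀ 1 ≠ 0 := fun h =>
    hz₁ (by linear_combination hAffine v₀ z₁ - hAffine v₀ z₀ + hz₀ + (z₀ - z₁) * h)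
  have hSlopeReg := (hF 0).sub (hF 1)
  refine ⟨fun v => F v 0 / (F v 0 - F v 1), (hF 0).div hSlopeReg hSlope, ?_, ?_⟩
  · rw [div_eq_iff hSlope]
    linear_combination hz₀ - hAffine v₀ z₀
  · filter_upwards [hSlopeReg.eventually_ne_zero hSlope] with v hv
    rw [hAffine]
    field_simp
    ring

end IsRegularAt

end Zariski

/-! ### The polynomials `A2_{(0;0)}` and `C1_{(0)}` -/

theorem sub_div_sub_swap {K : Type*} [DivisionRing K] (a b c d : K) :
    (a - b) / (c - d) = (b - a) / (d - c) := by
  rw [← neg_sub b a, ← neg_sub d c, neg_div_neg_eq]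

section QuadPolynomials

variable {x xa xb xc xd p p1 p2 q1 q2 : ℂ}

theorem A2_zero_zero :
    A2 0 0 x xa xb xc xd p1 p2 q1 q2 =
      ((p1 - q1 + (p2 - q2)) * (xb * xc - xa * xd) + (p1 - p2) * (xa * xc - xb * xd)
          + (q1 - q2) * (xa * xb - xc * xd)) * x
        + (p2 - q1) * (xa * x ^ 2 - xb * xc * xd) - (p2 - q2) * (xb * x ^ 2 - xa * xc * xd)
        - (p1 - q1) * (xc * x ^ 2 - xa * xb * xd) + (p1 - q2) * (xd * x ^ 2 - xa * xb * xc) := by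
  simp only [A2, Nat.cast_zero, zero_mul, add_zero]

theorem C1_zero :
    C1 0 x xa xb xc xd p p2 q1 q2 =
      (xc - xd) * (x - xa) * (x - xb) + 2 * ((p2 - q2) * (x - xa) - (p2 - q1) * (x - xb)) := by
  simp only [C1, Nat.cast_zero, pow_zero]
  ring

theorem A2_rotate :
    A2 0 0 x xd xc xb xa p2 p1 q2 q1 = A2 0 0 x xa xb xc xd p1 p2 q1 q2 := by
  simp only [A2_zero_zero]
  ring

theorem A2_eq_zero_swap :
    A2 0 0 x xc xd xa xb p2 p1 q1 q2 = 0 ↔ A2 0 0 x xa xb xc xd p1 p2 q1 q2 = 0 := by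
  rw [← neg_eq_zero]
  simp only [A2_zero_zero]
  ring_nf

theorem C1_eq_zero_swap :
    C1 0 x xb xa xd xc p p2 q2 q1 = 0 ↔ C1 0 x xa xb xc xd p p2 q1 q2 = 0 := by
  rw [← neg_eq_zero]
  simp only [C1_zero]
  ring_nf

theorem A2_eq_zero_iff (ha : x ≠ xa) (hb : x ≠ xb) (hc : x ≠ xc) (hd : x ≠ xd) :
    A2 0 0 x xa xb xc xd p1 p2 q1 q2 = 0 ↔
      (p2 - q1) / (x - xa) - (p2 - q2) / (x - xb) - (p1 - q1) / (x - xc) + (p1 - q2) / (x - xd)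
        = 0 := by
  rw [← sub_ne_zero] at ha hb hc hd
  have hProd : A2 0 0 x xa xb xc xd p1 p2 q1 q2 =
      ((p2 - q1) / (x - xa) - (p2 - q2) / (x - xb) - (p1 - q1) / (x - xc) + (p1 - q2) / (x - xd))
        * ((x - xa) * (x - xb) * (x - xc) * (x - xd)) := by
    simp only [A2_zero_zero]
    field_simp
    ring
  rw [hProd, mul_eq_zero, or_iff_left (by simp [ha, hb, hc, hd])]

theorem C1_eq_zero_iff (ha : x ≠ xa) (hb : x ≠ xb) :
    C1 0 x xa xb xc xd p p2 q1 q2 = 0 ↔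
      xc - xd = 2 * ((p2 - q1) / (x - xa)) - 2 * ((p2 - q2) / (x - xb)) := by
  rw [← sub_ne_zero] at ha hb
  have hProd : C1 0 x xa xb xc xd p p2 q1 q2 =
      (xc - xd - (2 * ((p2 - q1) / (x - xa)) - 2 * ((p2 - q2) / (x - xb))))
        * ((x - xa) * (x - xb)) := by
    simp only [C1_zero]
    field_simp
    ring
  rw [hProd, mul_eq_zero, or_iff_left (by simp [ha, hb]), sub_eq_zero]

/-- `A2` has degree one in each corner; eliminating the corner `w1` between the first two equations
leaves `(t1 - a) * (u0 - u2) ^ 2` times the third. -/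
theorem A2_triangle {a t0 t1 t2 u0 u1 u2 w0 w1 w2 : ℂ} (hu : u0 ≠ u2) (ht : t1 ≠ a)
    (h0 : A2 0 0 u0 w2 u1 w1 u2 t2 t1 a t0 = 0) (h2 : A2 0 0 u2 w1 u0 w0 u1 t1 t0 a t2 = 0) :
    A2 0 0 u1 w0 u2 w2 u0 t0 t2 a t1 = 0 := by
  have hElim : (t1 - a) * (u0 - u2) ^ 2 * A2 0 0 u1 w0 u2 w2 u0 t0 t2 a t1 =
      (A2 0 0 u2 1 u0 w0 u1 t1 t0 a t2 - A2 0 0 u2 0 u0 w0 u1 t1 t0 a t2)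
          * A2 0 0 u0 w2 u1 w1 u2 t2 t1 a t0
        - (A2 0 0 u0 w2 u1 1 u2 t2 t1 a t0 - A2 0 0 u0 w2 u1 0 u2 t2 t1 a t0)
          * A2 0 0 u2 w1 u0 w0 u1 t1 t0 a t2 := by
    repeat rw [A2_zero_zero]
    ring
  rw [h0, h2, mul_zero, mul_zero, sub_zero] at hElim
  exact (mul_eq_zero.1 hElim).resolve_left
    (mul_ne_zero (sub_ne_zero.2 ht) (pow_ne_zero 2 (sub_ne_zero.2 hu)))

/-- Summing the four-leg forms of the three `A2` equations, the legs inside the triangle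
`u0 u1 u2` cancel. -/
theorem C1_center_of_A2 {a t0 t1 t2 u0 u1 u2 w0 w1 w2 s0 s1 s2 : ℂ}
    (h01 : u0 ≠ u1) (h02 : u0 ≠ u2) (h12 : u1 ≠ u2)
    (hw01 : w0 ≠ u1) (hw02 : w0 ≠ u2) (hw10 : w1 ≠ u0) (hw12 : w1 ≠ u2)
    (hw20 : w2 ≠ u0) (hw21 : w2 ≠ u1)
    (hA0 : A2 0 0 u0 w2 u1 w1 u2 t2 t1 a t0 = 0) (hA1 : A2 0 0 u1 w0 u2 w2 u0 t0 t2 a t1 = 0)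
    (hA2 : A2 0 0 u2 w1 u0 w0 u1 t1 t0 a t2 = 0)
    (h1 : C1 0 w1 u0 u2 s0 s2 p a t2 t0 = 0) (h2 : C1 0 w2 u1 u0 s1 s0 p a t0 t1 = 0) :
    C1 0 w0 u2 u1 s2 s1 p a t1 t2 = 0 := by
  rw [A2_eq_zero_iff hw20.symm h01 hw10.symm h02] at hA0
  rw [A2_eq_zero_iff hw01.symm h12 hw21.symm h01.symm, sub_div_sub_swap t0 t1] at hA1
  rw [A2_eq_zero_iff hw12.symm h02.symm hw02.symm h12.symm, sub_div_sub_swap t1 t2,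
    sub_div_sub_swap t0 t2] at hA2
  rw [C1_eq_zero_iff hw10 hw12, sub_div_sub_swap a t2, sub_div_sub_swap a t0] at h1
  rw [C1_eq_zero_iff hw21 hw20, sub_div_sub_swap a t0, sub_div_sub_swap a t1] at h2
  rw [C1_eq_zero_iff hw02 hw01, sub_div_sub_swap a t1, sub_div_sub_swap a t2]
  linear_combination 2 * (hA0 + hA1 + hA2) - h1 - h2

theorem C1_corner_of_A2 {a t0 t1 t2 u0 u1 u2 w1 w2 s0 s1 s2 : ℂ}
    (hw10 : w1 ≠ u0) (hw12 : w1 ≠ u2) (hw20 : w2 ≠ u0) (hw21 : w2 ≠ u1)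
    (hA : A2 0 0 u0 w2 u1 w1 u2 t2 t1 a t0 = 0)
    (h1 : C1 0 w1 u0 u2 s0 s2 p a t2 t0 = 0) (h2 : C1 0 w2 u1 u0 s1 s0 p a t0 t1 = 0) :
    C1 0 s0 s2 s1 w1 w2 p t0 t2 t1 = 0 := by
  rw [C1_eq_zero_iff hw10 hw12] at h1
  rw [C1_eq_zero_iff hw21 hw20] at h2
  obtain rfl : s2 = s0 - (2 * ((a - t2) / (w1 - u0)) - 2 * ((a - t0) / (w1 - u2))) := by
    linear_combination -h1
  obtain rfl : s1 = s0 + (2 * ((a - t0) / (w2 - u1)) - 2 * ((a - t1) / (w2 - u0))) := by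
    linear_combination h2
  rw [← sub_ne_zero] at hw10 hw12 hw20 hw21
  have hProd : C1 0 s0 (s0 - (2 * ((a - t2) / (w1 - u0)) - 2 * ((a - t0) / (w1 - u2))))
        (s0 + (2 * ((a - t0) / (w2 - u1)) - 2 * ((a - t1) / (w2 - u0)))) w1 w2 p t0 t2 t1 =
      4 * (a - t0) * A2 0 0 u0 w2 u1 w1 u2 t2 t1 a t0 /
        ((w1 - u0) * (w1 - u2) * (w2 - u0) * (w2 - u1)) := by
    simp only [A2_zero_zero, C1_zero]
    field_simp
    ring
  rw [hProd, hA, mul_zero, zero_div]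

theorem A2_of_shared_legs {a b b' g h n x y u u' v v' : ℂ}
    (hx : n ≠ x) (hy : n ≠ y) (hu : n ≠ u) (hv : n ≠ v) (hu' : n ≠ u') (hv' : n ≠ v')
    (h1 : A2 0 0 n x u y v h g a b = 0) (h2 : A2 0 0 n x u' y v' h g a b' = 0) :
    A2 0 0 n v v' u u' g h b b' = 0 := by
  rw [A2_eq_zero_iff hx hu hy hv] at h1
  rw [A2_eq_zero_iff hx hu' hy hv'] at h2
  rw [A2_eq_zero_iff hv hv' hu hu']
  linear_combination h1 - h2

theorem C1_of_shared_leg {a b b' g x n u u' c d s : ℂ} (hn : x ≠ n) (hu : x ≠ u) (hu' : x ≠ u')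
    (h1 : C1 0 x u n c s p a b g = 0) (h2 : C1 0 x u' n d s p a b' g = 0) :
    C1 0 x u u' c d p a b b' = 0 := by
  rw [C1_eq_zero_iff hu hn] at h1
  rw [C1_eq_zero_iff hu' hn] at h2
  rw [C1_eq_zero_iff hu hu']
  linear_combination h1 - h2

theorem A2_of_C1_of_shared_corners {b b' g h s x y c d r e : ℂ}
    (hc : s ≠ c) (hd : s ≠ d) (hr : s ≠ r) (he : s ≠ e)
    (h1 : C1 0 s r c y x p b h g = 0) (h2 : C1 0 s e d y x p b' h g = 0) :
    A2 0 0 s r e c d g h b b' = 0 := by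
  rw [C1_eq_zero_iff hr hc] at h1
  rw [C1_eq_zero_iff he hd] at h2
  rw [A2_eq_zero_iff hr he hc hd]
  linear_combination (h1 - h2) / 2

end QuadPolynomials

section RegularCorners

variable {σ : Type*} {v₀ : σ → ℂ} {x xa xb xc xd p1 p2 q1 q2 : (σ → ℂ) → ℂ} {z₀ : ℂ}

theorem exists_isRegularAt_A2_second_corner
    (hx : IsRegularAt x v₀) (ha : IsRegularAt xa v₀) (hc : IsRegularAt xc v₀)
    (hd : IsRegularAt xd v₀) (hp1 : IsRegularAt p1 v₀) (hp2 : IsRegularAt p2 v₀)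
    (hq1 : IsRegularAt q1 v₀) (hq2 : IsRegularAt q2 v₀)
    (hxa : x v₀ ≠ xa v₀) (hxc : x v₀ ≠ xc v₀) (hxd : x v₀ ≠ xd v₀) (hpq : p2 v₀ ≠ q2 v₀)
    (h₀ : A2 0 0 (x v₀) (xa v₀) z₀ (xc v₀) (xd v₀) (p1 v₀) (p2 v₀) (q1 v₀) (q2 v₀) = 0) :
    ∃ r, IsRegularAt r v₀ ∧ r v₀ = z₀ ∧ ∀ᶠ v in zariskiNhds v₀,
      A2 0 0 (x v) (xa v) (r v) (xc v) (xd v) (p1 v) (p2 v) (q1 v) (q2 v) = 0 := by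
  have hCenter : A2 0 0 (x v₀) (xa v₀) (x v₀) (xc v₀) (xd v₀) (p1 v₀) (p2 v₀) (q1 v₀) (q2 v₀) =
      -((p2 v₀ - q2 v₀) * (x v₀ - xa v₀) * (x v₀ - xc v₀) * (x v₀ - xd v₀)) := by
    rw [A2_zero_zero]
    ring
  refine IsRegularAt.exists_root_of_affine (z₁ := x v₀)
    (F := fun v z => A2 0 0 (x v) (xa v) z (xc v) (xd v) (p1 v) (p2 v) (q1 v) (q2 v))
    (fun z => ?_) (fun v z => ?_) h₀ ?_
  · simp only [A2_zero_zero]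
    fun_prop
  · simp only [A2_zero_zero]
    ring
  · rw [hCenter, neg_ne_zero]
    exact mul_ne_zero (mul_ne_zero (mul_ne_zero (sub_ne_zero.2 hpq) (sub_ne_zero.2 hxa))
      (sub_ne_zero.2 hxc)) (sub_ne_zero.2 hxd)

theorem exists_isRegularAt_A2_third_corner
    (hx : IsRegularAt x v₀) (ha : IsRegularAt xa v₀) (hb : IsRegularAt xb v₀)
    (hd : IsRegularAt xd v₀) (hp1 : IsRegularAt p1 v₀) (hp2 : IsRegularAt p2 v₀)
    (hq1 : IsRegularAt q1 v₀) (hq2 : IsRegularAt q2 v₀)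
    (hxa : x v₀ ≠ xa v₀) (hxb : x v₀ ≠ xb v₀) (hxd : x v₀ ≠ xd v₀) (hpq : p1 v₀ ≠ q1 v₀)
    (h₀ : A2 0 0 (x v₀) (xa v₀) (xb v₀) z₀ (xd v₀) (p1 v₀) (p2 v₀) (q1 v₀) (q2 v₀) = 0) :
    ∃ r, IsRegularAt r v₀ ∧ r v₀ = z₀ ∧ ∀ᶠ v in zariskiNhds v₀,
      A2 0 0 (x v) (xa v) (xb v) (r v) (xd v) (p1 v) (p2 v) (q1 v) (q2 v) = 0 := by
  rw [← A2_rotate] at h₀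
  simpa only [A2_rotate] using exists_isRegularAt_A2_second_corner hx hd hb ha hp2 hp1 hq2 hq1
    hxd hxb hxa hpq h₀

theorem exists_isRegularAt_C1_fourth_corner {p : (σ → ℂ) → ℂ}
    (hx : IsRegularAt x v₀) (ha : IsRegularAt xa v₀) (hb : IsRegularAt xb v₀)
    (hc : IsRegularAt xc v₀) (hp2 : IsRegularAt p2 v₀)
    (hq1 : IsRegularAt q1 v₀) (hq2 : IsRegularAt q2 v₀)
    (hxa : x v₀ ≠ xa v₀) (hxb : x v₀ ≠ xb v₀)
    (h₀ : C1 0 (x v₀) (xa v₀) (xb v₀) (xc v₀) z₀ (p v₀) (p2 v₀) (q1 v₀) (q2 v₀) = 0) :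
    ∃ r, IsRegularAt r v₀ ∧ r v₀ = z₀ ∧ ∀ᶠ v in zariskiNhds v₀,
      C1 0 (x v) (xa v) (xb v) (xc v) (r v) (p v) (p2 v) (q1 v) (q2 v) = 0 := by
  have hShift :
      C1 0 (x v₀) (xa v₀) (xb v₀) (xc v₀) (z₀ + 1) (p v₀) (p2 v₀) (q1 v₀) (q2 v₀) =
        -((x v₀ - xa v₀) * (x v₀ - xb v₀)) := by
    rw [C1_zero] at h₀ ⊢
    linear_combination h₀
  refine IsRegularAt.exists_root_of_affine (z₁ := z₀ + 1)
    (F := fun v z => C1 0 (x v) (xa v) (xb v) (xc v) z (p v) (p2 v) (q1 v) (q2 v))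
    (fun z => ?_) (fun v z => ?_) h₀ ?_
  · simp only [C1_zero]
    fun_prop
  · simp only [C1_zero]
    ring
  · rw [hShift, neg_ne_zero]
    exact mul_ne_zero (sub_ne_zero.2 hxa) (sub_ne_zero.2 hxb)

end RegularCorners

/-! ### The face-centered triangular prism -/

/-- The system of nine face-centered quad equations on a triangular prism, together with the
conditions under which their legs have nonzero denominators. The top triangle is `u`, the bottom
triangle is `s`, and `w i` is the center of the lateral face opposite to the vertical edge joining
`u i` to `s i`; to that edge belongs the parameter `t i`. The value `p` is the first parameter of
`C1`, on which `C1` does not depend. -/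
structure IsPrism (p a : ℂ) (t u w s : Fin 3 → ℂ) : Prop where
  top : ∀ i, A2 0 0 (u i) (w (i + 2)) (u (i + 1)) (w (i + 1)) (u (i + 2))
    (t (i + 2)) (t (i + 1)) a (t i) = 0
  side : ∀ i, C1 0 (w i) (u (i + 2)) (u (i + 1)) (s (i + 2)) (s (i + 1))
    p a (t (i + 1)) (t (i + 2)) = 0
  bottom : ∀ i, C1 0 (s i) (s (i + 2)) (s (i + 1)) (w (i + 1)) (w (i + 2))
    p (t i) (t (i + 2)) (t (i + 1)) = 0
  top_ne_top : Pairwise fun i j => u i ≠ u j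
  side_ne_top : Pairwise fun i j => w i ≠ u j
  bottom_ne_bottom : Pairwise fun i j => s i ≠ s j

namespace IsPrism

variable {p a : ℂ} {t u w s : Fin 3 → ℂ}

theorem of_four_equations (ht : t 1 ≠ a) (hu : Pairwise fun i j => u i ≠ u j)
    (hw : Pairwise fun i j => w i ≠ u j) (hs : Pairwise fun i j => s i ≠ s j)
    (hTop0 : A2 0 0 (u 0) (w 2) (u 1) (w 1) (u 2) (t 2) (t 1) a (t 0) = 0)
    (hTop2 : A2 0 0 (u 2) (w 1) (u 0) (w 0) (u 1) (t 1) (t 0) a (t 2) = 0)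
    (hSide1 : C1 0 (w 1) (u 0) (u 2) (s 0) (s 2) p a (t 2) (t 0) = 0)
    (hSide2 : C1 0 (w 2) (u 1) (u 0) (s 1) (s 0) p a (t 0) (t 1) = 0) :
    IsPrism p a t u w s := by
  have hTop1 := A2_triangle (hu (by decide)) ht hTop0 hTop2
  have hSide0 := C1_center_of_A2 (hu (by decide)) (hu (by decide)) (hu (by decide))
    (hw (by decide)) (hw (by decide)) (hw (by decide)) (hw (by decide)) (hw (by decide))
    (hw (by decide)) hTop0 hTop1 hTop2 hSide1 hSide2
  have hTop : ∀ i, A2 0 0 (u i) (w (i + 2)) (u (i + 1)) (w (i + 1)) (u (i + 2))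
      (t (i + 2)) (t (i + 1)) a (t i) = 0 := by
    intro i
    fin_cases i
    exacts [hTop0, hTop1, hTop2]
  have hSide : ∀ i, C1 0 (w i) (u (i + 2)) (u (i + 1)) (s (i + 2)) (s (i + 1))
      p a (t (i + 1)) (t (i + 2)) = 0 := by
    intro i
    fin_cases i
    exacts [hSide0, hSide1, hSide2]
  refine ⟨hTop, hSide, fun i => ?_, hu, hw, hs⟩
  have hSide' := hSide (i + 1)
  have hSide'' := hSide (i + 2)
  rw [show i + 1 + 2 = i by omega, show i + 1 + 1 = i + 2 by omega] at hSide'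
  rw [show i + 2 + 2 = i + 1 by omega, show i + 2 + 1 = i by omega] at hSide''
  exact C1_corner_of_A2 (hw (by omega)) (hw (by omega)) (hw (by omega)) (hw (by omega))
    (hTop i) hSide' hSide''

theorem exists_deformation {σ : Type*} {v₀ : σ → ℂ}
    {p a t0 t1 t2 u0 u2 w1 w2 s0 : (σ → ℂ) → ℂ} {u1₀ w0₀ s1₀ s2₀ : ℂ}
    (ha : IsRegularAt a v₀) (ht0 : IsRegularAt t0 v₀) (ht1 : IsRegularAt t1 v₀)
    (ht2 : IsRegularAt t2 v₀) (hu0 : IsRegularAt u0 v₀) (hu2 : IsRegularAt u2 v₀)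
    (hw1 : IsRegularAt w1 v₀) (hw2 : IsRegularAt w2 v₀) (hs0 : IsRegularAt s0 v₀)
    (h₀ : IsPrism (p v₀) (a v₀) ![t0 v₀, t1 v₀, t2 v₀] ![u0 v₀, u1₀, u2 v₀] ![w0₀, w1 v₀, w2 v₀]
      ![s0 v₀, s1₀, s2₀])
    (ht₀ : t1 v₀ ≠ t0 v₀) (hta₀ : t1 v₀ ≠ a v₀) :
    ∃ u1 w0 s1 s2 : (σ → ℂ) → ℂ,
      IsRegularAt w0 v₀ ∧ w0 v₀ = w0₀ ∧ IsRegularAt s2 v₀ ∧ s2 v₀ = s2₀ ∧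
      ∀ᶠ v in zariskiNhds v₀, IsPrism (p v) (a v) ![t0 v, t1 v, t2 v] ![u0 v, u1 v, u2 v]
        ![w0 v, w1 v, w2 v] ![s0 v, s1 v, s2 v] := by
  have hTop (i j : Fin 3) (hij : i ≠ j) := h₀.top_ne_top hij
  have hSide (i j : Fin 3) (hij : i ≠ j) := h₀.side_ne_top hij
  obtain ⟨u1, hu1, rfl, hTop0⟩ := exists_isRegularAt_A2_second_corner hu0 hw2 hw1 hu2 ht2 ht1 ha ht0
    (hSide 2 0 (by decide)).symm (hSide 1 0 (by decide)).symm (hTop 0 2 (by decide)) ht₀ (h₀.top 0)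
  obtain ⟨w0, hw0, rfl, hTop2⟩ := exists_isRegularAt_A2_third_corner hu2 hw1 hu0 hu1 ht1 ht0 ha ht2
    (hSide 1 2 (by decide)).symm (hTop 2 0 (by decide)) (hTop 2 1 (by decide)) hta₀ (h₀.top 2)
  obtain ⟨s2, hs2, rfl, hSide1⟩ := exists_isRegularAt_C1_fourth_corner hw1 hu0 hu2 hs0 ha ht2 ht0
    (hSide 1 0 (by decide)) (hSide 1 2 (by decide)) (h₀.side 1)
  obtain ⟨s1, hs1, rfl, hSide2⟩ := exists_isRegularAt_C1_fourth_corner hw2 hu0 hu1 hs0 ha ht1 ht0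
    (hSide 2 0 (by decide)) (hSide 2 1 (by decide)) (C1_eq_zero_swap.2 (h₀.side 2))
  have hu := IsRegularAt.vecCons₃ hu0 hu1 hu2
  have hw := IsRegularAt.vecCons₃ hw0 hw1 hw2
  have hs := IsRegularAt.vecCons₃ hs0 hs1 hs2
  refine ⟨u1, w0, s1, s2, hw0, rfl, hs2, rfl, ?_⟩
  filter_upwards [hTop0, hTop2, hSide1, hSide2, ht1.eventually_ne ha hta₀,
    IsRegularAt.eventually_pairwise_ne hu hu h₀.top_ne_top,
    IsRegularAt.eventually_pairwise_ne hw hu h₀.side_ne_top,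
    IsRegularAt.eventually_pairwise_ne hs hs h₀.bottom_ne_bottom]
    with v hTop0 hTop2 hSide1 hSide2 hta hu hw hs
  exact of_four_equations hta hu hw hs hTop0 hTop2 hSide1 (C1_eq_zero_swap.2 hSide2)

end IsPrism

/-! ### The cube -/

/-- The CAFCC system of fourteen equations for a pair `(A, C)` of face-centered quad polynomials. -/
def CAFCC (A C : ℂ → ℂ → ℂ → ℂ → ℂ → ℂ → ℂ → ℂ → ℂ → ℂ)
    (a1 a2 b1 b2 g1 g2 x xa xb xc xd y ya yb yc yd zn ze zs zw : ℂ) : Prop :=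
  C x xa xb xc xd a1 a2 b1 b2 = 0 ∧
  C zw ya xa yc xc a1 a2 g1 g2 = 0 ∧
  A zn ya yb xa xb g1 g2 b1 b2 = 0 ∧
  C y ya yb yc yd a1 a2 b1 b2 = 0 ∧
  C ze yb xb yd xd a1 a2 g1 g2 = 0 ∧
  A zs yc yd xc xd g1 g2 b1 b2 = 0 ∧
  A xa zw ya x zn b1 g2 a2 g1 = 0 ∧
  A xb ze yb x zn b2 g2 a2 g1 = 0 ∧
  C xc zs yc x zw a1 g1 b1 g2 = 0 ∧
  C xd yd zs ze x a1 g1 g2 b2 = 0 ∧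
  A ya zw xa y zn b1 g1 a2 g2 = 0 ∧
  A yb ze xb y zn b2 g1 a2 g2 = 0 ∧
  C yc xc zs zw y a1 g2 g1 b1 = 0 ∧
  C yd xd zs ze y a1 g2 g1 b2 = 0

/-- The cube is cut into two prisms sharing the edge `zn zs` and the face centers `x` and `y`. -/
theorem IsPrism.glue {a1 a2 b1 b2 g1 g2 x xa xb xc xd y ya yb yc yd zn ze zs zw : ℂ}
    (W : IsPrism a1 a2 ![g1, g2, b1] ![xa, ya, zn] ![y, x, zw] ![xc, yc, zs])
    (E : IsPrism a1 a2 ![b2, g2, g1] ![zn, yb, xb] ![ze, x, y] ![zs, yd, xd]) :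
    CAFCC (A2 0 0) (C1 0) a1 a2 b1 b2 g1 g2 x xa xb xc xd y ya yb yc yd zn ze zs zw := by
  have hx : C1 0 x xa xb xc xd a1 a2 b1 b2 = 0 :=
    C1_of_shared_leg (W.side_ne_top (i := 1) (j := 2) (by decide))
      (W.side_ne_top (i := 1) (j := 0) (by decide)) (E.side_ne_top (i := 1) (j := 2) (by decide))
      (W.side 1) (C1_eq_zero_swap.2 (E.side 1))
  have hy : C1 0 y ya yb yc yd a1 a2 b1 b2 = 0 :=
    C1_of_shared_leg (W.side_ne_top (i := 0) (j := 2) (by decide))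
      (W.side_ne_top (i := 0) (j := 1) (by decide)) (E.side_ne_top (i := 2) (j := 1) (by decide))
      (C1_eq_zero_swap.2 (W.side 0)) (E.side 2)
  have hzn : A2 0 0 zn ya yb xa xb g1 g2 b1 b2 = 0 :=
    A2_of_shared_legs (W.side_ne_top (i := 1) (j := 2) (by decide)).symm
      (W.side_ne_top (i := 0) (j := 2) (by decide)).symm
      (W.top_ne_top (i := 2) (j := 0) (by decide)) (W.top_ne_top (i := 2) (j := 1) (by decide))
      (E.top_ne_top (i := 0) (j := 2) (by decide)) (E.top_ne_top (i := 0) (j := 1) (by decide))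
      (W.top 2) (A2_eq_zero_swap.2 (E.top 0))
  have hzs : A2 0 0 zs yc yd xc xd g1 g2 b1 b2 = 0 :=
    A2_of_C1_of_shared_corners (W.bottom_ne_bottom (i := 2) (j := 0) (by decide))
      (E.bottom_ne_bottom (i := 0) (j := 2) (by decide))
      (W.bottom_ne_bottom (i := 2) (j := 1) (by decide))
      (E.bottom_ne_bottom (i := 0) (j := 1) (by decide))
      (W.bottom 2) (C1_eq_zero_swap.2 (E.bottom 0))
  exact ⟨hx, W.side 2, hzn, hy, C1_eq_zero_swap.2 (E.side 0), hzs, W.top 0,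
    A2_eq_zero_swap.2 (E.top 2), W.bottom 0, E.bottom 2, A2_eq_zero_swap.2 (W.top 1), E.top 1,
    W.bottom 1, C1_eq_zero_swap.2 (E.bottom 1)⟩

/-- The values of `(a1, a2, b1, b2, g1, g2, x, xa, xb, xc, zn, zw)` in one integral solution in
which adjacent vertices are distinct. -/
def basePoint : Fin 12 → ℂ := ![0, -1, 4, 3, -1, 0, 3, 1, 2, -1, 4, 3]

theorem isPrism_west_basePoint :
    IsPrism 0 (-1) ![-1, 0, 4] ![1, -2, 4] ![3, 3, 3] ![-1, 0, 4] := by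
  constructor <;> simp [Pairwise, Fin.forall_fin_succ, A2_zero_zero, C1_zero] <;> norm_num

theorem isPrism_east_basePoint :
    IsPrism 0 (-1) ![3, 0, -1] ![4, 1, 2] ![3, 3, 3] ![4, -2, -4] := by
  constructor <;> simp [Pairwise, Fin.forall_fin_succ, A2_zero_zero, C1_zero] <;> norm_num

theorem eventually_exists_cafcc : ∀ᶠ v in zariskiNhds basePoint, ∃ xd y ya yb yc yd ze zs : ℂ,
    CAFCC (A2 0 0) (C1 0) (v 0) (v 1) (v 2) (v 3) (v 4) (v 5) (v 6) (v 7) (v 8) (v 9) xd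
      y ya yb yc yd (v 10) ze zs (v 11) := by
  obtain ⟨ya, y, yc, zs, hy, hy₀, hzs, hzs₀, hWest⟩ :=
    IsPrism.exists_deformation (v₀ := basePoint) (p := fun v => v 0) (.apply 1)
      (.apply 4) (.apply 5) (.apply 2) (.apply 7) (.apply 10) (.apply 6) (.apply 11) (.apply 9)
      isPrism_west_basePoint (by simp [basePoint]) (by simp [basePoint])
  obtain ⟨yb, ze, yd, xd, -, -, -, -, hEast⟩ :=
    IsPrism.exists_deformation (v₀ := basePoint) (p := fun v => v 0) (.apply 1)
      (.apply 3) (.apply 5) (.apply 4) (.apply 10) (.apply 8) (.apply 6) hy hzs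
      (by rw [hy₀, hzs₀]; exact isPrism_east_basePoint) (by simp [basePoint]) (by simp [basePoint])
  filter_upwards [hWest, hEast] with v hW hE
  exact ⟨xd v, y v, ya v, yb v, yc v, yd v, ze v, zs v, hW.glue hE⟩

theorem statement12 :
    ∃ p : MvPolynomial (Fin 12) ℂ, p ≠ 0 ∧
    ∀ a1 a2 b1 b2 g1 g2 x xa xb xc zn zw : ℂ,
      MvPolynomial.eval (![a1, a2, b1, b2, g1, g2, x, xa, xb, xc, zn, zw]) p ≠ 0 →
      ∃ xd y ya yb yc yd ze zs : ℂ,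
        C1 0 x xa xb xc xd a1 a2 b1 b2 = 0 ∧
        C1 0 zw ya xa yc xc a1 a2 g1 g2 = 0 ∧
        A2 0 0 zn ya yb xa xb g1 g2 b1 b2 = 0 ∧
        C1 0 y ya yb yc yd a1 a2 b1 b2 = 0 ∧
        C1 0 ze yb xb yd xd a1 a2 g1 g2 = 0 ∧
        A2 0 0 zs yc yd xc xd g1 g2 b1 b2 = 0 ∧
        A2 0 0 xa zw ya x zn b1 g2 a2 g1 = 0 ∧
        A2 0 0 xb ze yb x zn b2 g2 a2 g1 = 0 ∧
        C1 0 xc zs yc x zw a1 g1 b1 g2 = 0 ∧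
        C1 0 xd yd zs ze x a1 g1 g2 b2 = 0 ∧
        A2 0 0 ya zw xa y zn b1 g1 a2 g2 = 0 ∧
        A2 0 0 yb ze xb y zn b2 g1 a2 g2 = 0 ∧
        C1 0 yc xc zs zw y a1 g2 g1 b1 = 0 ∧
        C1 0 yd xd zs ze y a1 g2 g1 b2 = 0 := by
  obtain ⟨p, hp, hSolvable⟩ := eventually_zariskiNhds_iff.1 eventually_exists_cafcc
  exact ⟨p, fun h => hp (by rw [h, map_zero]),
    fun a1 a2 b1 b2 g1 g2 x xa xb xc zn zw =>
      hSolvable ![a1, a2, b1, b2, g1, g2, x, xa, xb, xc, zn, zw]⟩
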